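/- Suppose Conditions (A1')–(A4') hold. Fix ε ∈ (0,1) and η0 ∈ (0, ε), and let τ_n be the GSPRT stopping time with upper threshold A_n = n·min_{γ∈Γ}(D(p_γ‖p0) + Φ^{-1}(ε − η0)·√(V(p_γ‖p0)/n)) (and any lower threshold B_n > 0). Then there is a finite constant T1, depending only on the uniformly bounded second and third absolute moments of ξ(γ) over Γ, such that for every γ0 ∈ Γ, P_{γ0}(τ_n > n) ≤ ε − η0 + T1/√n; consequently there exists n1(ε) such that sup_{γ∈Γ} P_γ(τ_n > n) < ε for all n > n1(ε). -/

import Mathlib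

open MeasureTheory ProbabilityTheory Filter

noncomputable section

/-- The σ-algebra on the sequence space `ℕ → 𝒳` generated by the first `n`
coordinates `X^n = (X_0, …, X_{n-1})`. -/
def cylSA (𝒳 : Type*) [MeasurableSpace 𝒳] (n : ℕ) : MeasurableSpace (ℕ → 𝒳) :=
  MeasurableSpace.comap (fun ω (i : Fin n) => ω i) MeasurableSpace.pi

/-- `τ` is a stopping time adapted to the natural filtration of the coordinate
process on `ℕ → 𝒳` (`τ` may take the value `∞`). -/
def IsStoppingTimeCyl {𝒳 : Type*} [MeasurableSpace 𝒳] (τ : (ℕ → 𝒳) → ℕ∞) : Prop :=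
  ∀ n : ℕ, MeasurableSet[cylSA 𝒳 n] {ω | τ ω ≤ (n : ℕ∞)}

/-- The event `A` belongs to the stopped σ-algebra `F_τ`. -/
def StopMeasurableCyl {𝒳 : Type*} [MeasurableSpace 𝒳] (τ : (ℕ → 𝒳) → ℕ∞)
    (A : Set (ℕ → 𝒳)) : Prop :=
  ∀ n : ℕ, MeasurableSet[cylSA 𝒳 n] (A ∩ {ω | τ ω ≤ (n : ℕ∞)})

/-- `P` is the law of an i.i.d. sequence of `𝒳`-valued random variables with
common marginal distribution `ν`, characterized through the finite-dimensional
cylinder probabilities. -/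
def IsIIDLaw {𝒳 : Type*} [MeasurableSpace 𝒳] (P : Measure (ℕ → 𝒳)) (ν : Measure 𝒳) : Prop :=
  IsProbabilityMeasure P ∧
  ∀ (n : ℕ) (A : Fin n → Set 𝒳), (∀ i, MeasurableSet (A i)) →
    P {ω | ∀ i : Fin n, ω i ∈ A i} = ∏ i, ν (A i)

/-- The log-likelihood ratio `S_n(γ) = Σ_{i<n} log (p_γ(X_i) / p_0(X_i))`
(here `q = p_γ`). -/
def llr {𝒳 : Type*} (p0 q : 𝒳 → ℝ) (n : ℕ) (ω : ℕ → 𝒳) : ℝ :=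
  ∑ k ∈ Finset.range n, Real.log (q (ω k) / p0 (ω k))

/-- The maximal log-likelihood ratio `S_n = sup_{γ ∈ Γ} S_n(γ)`. -/
def maxLlr {𝒳 : Type*} {d : ℕ} (p0 : 𝒳 → ℝ) (p : (Fin d → ℝ) → 𝒳 → ℝ)
    (Γ : Set (Fin d → ℝ)) (n : ℕ) (ω : ℕ → 𝒳) : ℝ :=
  ⨆ γ ∈ Γ, llr p0 (p γ) n ω

/-- The GSPRT stopping time `τ = inf {n : S_n > A or S_n < -B}`. -/
def gsprtTau {𝒳 : Type*} {d : ℕ} (p0 : 𝒳 → ℝ) (p : (Fin d → ℝ) → 𝒳 → ℝ)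
    (Γ : Set (Fin d → ℝ)) (A B : ℝ) (ω : ℕ → 𝒳) : ℕ∞ :=
  sInf {m : ℕ∞ | ∃ k : ℕ, m = k ∧
    (A < maxLlr p0 p Γ k ω ∨ maxLlr p0 p Γ k ω < -B)}

open scoped Classical in
/-- The GSPRT decision rule: `δ = 1` iff `S_τ > A`. -/
def gsprtDelta {𝒳 : Type*} {d : ℕ} (p0 : 𝒳 → ℝ) (p : (Fin d → ℝ) → 𝒳 → ℝ)
    (Γ : Set (Fin d → ℝ)) (A B : ℝ) (ω : ℕ → 𝒳) : Bool :=
  if A < maxLlr p0 p Γ (gsprtTau p0 p Γ A B ω).toNat ω then true else false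

/-- The Kullback--Leibler divergence `D(p‖q) = ∫ p log (p/q) dμ` between the
densities `p` and `q` with respect to the base measure `μ`. -/
def klCts {𝒳 : Type*} [MeasurableSpace 𝒳] (μ : Measure 𝒳) (p q : 𝒳 → ℝ) : ℝ :=
  ∫ x, p x * Real.log (p x / q x) ∂μ

/-- KL divergence between pmfs on `Fin d`. -/
def klFin {d : ℕ} (p q : Fin d → ℝ) : ℝ := ∑ i, p i * Real.log (p i / q i)

/-- Relative entropy variance between pmfs on `Fin d`:
`V(p‖q) = Var_p[log (p(X)/q(X))]`. -/
def vFin {d : ℕ} (p q : Fin d → ℝ) : ℝ :=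
  ∑ i, p i * (Real.log (p i / q i)) ^ 2 - (klFin p q) ^ 2

/-- The standard normal cumulative distribution function `Φ`. -/
def stdGaussCDF (x : ℝ) : ℝ :=
  (Real.sqrt (2 * Real.pi))⁻¹ * ∫ t in Set.Iic x, Real.exp (-(t ^ 2) / 2)

/-- The Karush--Kuhn--Tucker map associated to the optimization problem
`min Σ_i q i log (p0 i / γ i)` subject to `Σ_i γ i = 1`, `F γ ≤ 0`; Condition
(A4') is the nonsingularity of its Jacobian at the optimizer for `q = p0`. -/
def kktMap {d : ℕ} (F : (Fin d → ℝ) → ℝ) :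
    ((Fin d → ℝ) × ℝ × ℝ) → ((Fin d → ℝ) × ℝ × ℝ) := fun x =>
  (fun i => x.2.1 * x.1 i + x.2.2 * x.1 i * fderiv ℝ F x.1 (Pi.single i 1),
    ∑ i, x.1 i, F x.1)

/-- `P` is the law of an i.i.d. sequence of `Fin d`-valued random variables with
common pmf `p`, characterized through cylinder probabilities. -/
def IsIIDPmfLaw {d : ℕ} (P : Measure (ℕ → Fin d)) (p : Fin d → ℝ) : Prop :=
  IsProbabilityMeasure P ∧
  ∀ (n : ℕ) (a : Fin n → Fin d),
    P {ω | ∀ i : Fin n, ω i = a i} = ∏ i, ENNReal.ofReal (p (a i))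

/-- The sequence of sequential hypothesis tests `(δ_n, τ_n)` satisfies the
probabilistic constraints on the stopping time with tolerance `ε`. -/
def GoodTestSeq {𝒳 : Type*} [MeasurableSpace 𝒳] {d : ℕ} (Γ : Set (Fin d → ℝ))
    (P0 : Measure (ℕ → 𝒳)) (P : (Fin d → ℝ) → Measure (ℕ → 𝒳)) (ε : ℝ)
    (τs : ℕ → (ℕ → 𝒳) → ℕ∞) (δs : ℕ → (ℕ → 𝒳) → Bool) : Prop :=
  (∀ n, IsStoppingTimeCyl (τs n)) ∧
  (∀ n, StopMeasurableCyl (τs n) {ω | δs n ω = true}) ∧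
  (∀ n, P0 {ω | τs n ω ≠ ⊤} = 1 ∧ ∀ γ ∈ Γ, P γ {ω | τs n ω ≠ ⊤} = 1) ∧
  (∀ᶠ n : ℕ in Filter.atTop,
    P0 {ω | (n : ℕ∞) < τs n ω} < ENNReal.ofReal ε ∧
    (⨆ γ ∈ Γ, P γ {ω | (n : ℕ∞) < τs n ω}) < ENNReal.ofReal ε)

/-- The second-order exponent pair `(G_0, G_1)` is attained by the test sequence
`(δ_n, τ_n)` relative to the first-order terms `D_0 = D(p_{γ*}‖p_0)` and
`D_1 = D(p_0‖p_{γ'})`: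
`G_0 ≤ liminf n^{-1/2} (log (1/P_{1|0}(δ_n,τ_n)) - n D_0)` and
`G_1 ≤ liminf n^{-1/2} (log (1/P_{0|1}(δ_n,τ_n)) - n D_1)`. -/
def AchievesSecondOrder {𝒳 : Type*} [MeasurableSpace 𝒳] {d : ℕ} (Γ : Set (Fin d → ℝ))
    (P0 : Measure (ℕ → 𝒳)) (P : (Fin d → ℝ) → Measure (ℕ → 𝒳)) (D0 D1 G0 G1 : ℝ)
    (τs : ℕ → (ℕ → 𝒳) → ℕ∞) (δs : ℕ → (ℕ → 𝒳) → Bool) : Prop :=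
  G0 ≤ Filter.liminf (fun n : ℕ =>
      (-Real.log ((P0 {ω | δs n ω = true}).toReal) - n * D0) / Real.sqrt n)
      Filter.atTop ∧
  G1 ≤ Filter.liminf (fun n : ℕ =>
      (-Real.log ((⨆ γ ∈ Γ, P γ {ω | δs n ω = false}).toReal) - n * D1) / Real.sqrt n)
      Filter.atTop

/-!
If the test is still running at time `n`, then `S_n(γ₀) ≤ S_n ≤ A_n`, and the definition of `A_n` as
a minimum over `Γ` gives `S_n(γ₀) ≤ n D(p_γ₀‖p₀) + z √(n V(p_γ₀‖p₀))`. Since `S_n(γ₀)` is a sum of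
i.i.d. terms with mean `D(p_γ₀‖p₀)` and variance `V(p_γ₀‖p₀)`, a Berry–Esseen bound shows that this
has probability at most `Φ(z) + O(1/√n)`. The constant is uniform because `closure Γ` is a compact
set of positive pmfs that omits `p₀`: there the log-likelihood ratios are bounded and `V` is bounded
away from zero.

The one-sided Berry–Esseen bound for bounded summands comes from Stein's method. Let `f` solve
`f' w - w f w = 1_{w < Z} - Φ Z`, let `W` be the normalized sum and `Wᵢ` the sum without `Xᵢ`. By
independence `E[Xᵢ f(W)] = E[Xᵢ (f(Wᵢ + Xᵢ) - f(Wᵢ))]`, and bounding `f'` below on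
`[Wᵢ - δ, Wᵢ + δ]`, where `δ ≥ |Xᵢ|`, by a function of `Wᵢ` gives, after summation over `i`,
`E[W f(W)] ≥ P(W ≤ Z - 2δ) - Φ Z + E[W f(W)] - 8δ`.
-/

local notation "φ" => gaussianPDFReal 0 1
local notation "Φ" => stdGaussCDF

section StandardGaussian

lemma gaussianPDFReal_zero_one (x : ℝ) :
    φ x = (Real.sqrt (2 * Real.pi))⁻¹ * Real.exp (-(x ^ 2) / 2) := by
  simp [gaussianPDFReal]

lemma gaussianPDFReal_zero_one_pos (x : ℝ) : 0 < φ x :=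
  gaussianPDFReal_pos 0 1 x one_ne_zero

lemma gaussianPDFReal_zero_one_neg (x : ℝ) : φ (-x) = φ x := by
  simp only [gaussianPDFReal_zero_one, neg_sq]

lemma gaussianPDFReal_zero_one_le_one (x : ℝ) : φ x ≤ 1 := by
  have hsqrt : 1 ≤ Real.sqrt (2 * Real.pi) :=
    Real.one_le_sqrt.2 (by linarith [Real.pi_gt_three])
  have hexp : Real.exp (-(x ^ 2) / 2) ≤ 1 := Real.exp_le_one_iff.2 (by linarith [sq_nonneg x])
  rw [gaussianPDFReal_zero_one]
  exact mul_le_one₀ (inv_le_one_of_one_le₀ hsqrt) (Real.exp_pos _).le hexp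

lemma hasDerivAt_gaussianPDFReal_zero_one (x : ℝ) : HasDerivAt φ (-x * φ x) x := by
  have hφ : φ = fun t => (Real.sqrt (2 * Real.pi))⁻¹ * Real.exp (-(t ^ 2) / 2) :=
    funext gaussianPDFReal_zero_one
  have hexponent : HasDerivAt (fun t : ℝ => -(t ^ 2) / 2) (-x) x := by
    simpa [neg_div] using ((hasDerivAt_pow 2 x).neg.div_const 2)
  rw [hφ]
  exact (hexponent.exp.const_mul _).congr_deriv (by ring)

lemma continuous_gaussianPDFReal_zero_one : Continuous φ :=
  continuous_iff_continuousAt.2 fun x => (hasDerivAt_gaussianPDFReal_zero_one x).continuousAt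

lemma tendsto_gaussianPDFReal_zero_one_atTop : Tendsto φ atTop (nhds 0) := by
  have hsq : Tendsto (fun t : ℝ => t ^ 2 / 2) atTop atTop :=
    (tendsto_pow_atTop two_ne_zero).atTop_div_const two_pos
  have hexp := (Real.tendsto_exp_neg_atTop_nhds_zero.comp hsq).const_mul
    (Real.sqrt (2 * Real.pi))⁻¹
  rw [mul_zero] at hexp
  refine hexp.congr fun t => ?_
  rw [gaussianPDFReal_zero_one, Function.comp_apply, neg_div]

lemma integrable_mul_gaussianPDFReal_zero_one : Integrable fun t => t * φ t := by
  refine ((integrable_mul_exp_neg_mul_sq (b := 1 / 2) (by norm_num)).const_mul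
    (Real.sqrt (2 * Real.pi))⁻¹).congr (Eventually.of_forall fun t => ?_)
  simp only [gaussianPDFReal_zero_one]
  ring_nf

lemma stdGaussCDF_eq_integral (x : ℝ) : Φ x = ∫ t in Set.Iic x, φ t := by
  simp_rw [stdGaussCDF, gaussianPDFReal_zero_one, integral_const_mul]

lemma stdGaussCDF_eq_cdf (x : ℝ) : Φ x = cdf (gaussianReal 0 1) x := by
  rw [cdf_eq_real, measureReal_def, gaussianReal_apply_eq_integral 0 one_ne_zero,
    ENNReal.toReal_ofReal (integral_nonneg (gaussianPDFReal_nonneg 0 1)), stdGaussCDF_eq_integral]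

lemma stdGaussCDF_nonneg (x : ℝ) : 0 ≤ Φ x :=
  stdGaussCDF_eq_cdf x ▸ cdf_nonneg _ x

lemma stdGaussCDF_le_one (x : ℝ) : Φ x ≤ 1 :=
  stdGaussCDF_eq_cdf x ▸ cdf_le_one _ x

lemma stdGaussCDF_monotone : Monotone Φ := fun x y hxy => by
  simpa only [stdGaussCDF_eq_cdf] using monotone_cdf _ hxy

lemma one_sub_stdGaussCDF (x : ℝ) : 1 - Φ x = ∫ t in Set.Ioi x, φ t := by
  have hφ := integrable_gaussianPDFReal 0 1
  rw [stdGaussCDF_eq_integral, ← integral_gaussianPDFReal_eq_one 0 one_ne_zero,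
    ← intervalIntegral.integral_Iic_add_Ioi (b := x) hφ.integrableOn hφ.integrableOn,
    add_sub_cancel_left]

lemma stdGaussCDF_neg (x : ℝ) : Φ (-x) = 1 - Φ x := by
  rw [one_sub_stdGaussCDF, stdGaussCDF_eq_integral]
  simpa only [gaussianPDFReal_zero_one_neg, neg_neg] using integral_comp_neg_Iic (-x) φ

lemma hasDerivAt_stdGaussCDF (x : ℝ) : HasDerivAt Φ (φ x) x := by
  have hφ := integrable_gaussianPDFReal 0 1
  have hΦ : Φ = fun y => Φ 0 + ∫ t in (0 : ℝ)..y, φ t := by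
    ext y
    rw [← intervalIntegral.integral_Iic_sub_Iic hφ.integrableOn hφ.integrableOn,
      stdGaussCDF_eq_integral, stdGaussCDF_eq_integral, add_sub_cancel]
  rw [hΦ]
  exact (continuous_gaussianPDFReal_zero_one.integral_hasStrictDerivAt 0 x).hasDerivAt.const_add _

lemma continuous_stdGaussCDF : Continuous Φ :=
  continuous_iff_continuousAt.2 fun x => (hasDerivAt_stdGaussCDF x).continuousAt

lemma stdGaussCDF_add_le (x : ℝ) {δ : ℝ} (hδ : 0 ≤ δ) : Φ (x + δ) ≤ Φ x + δ := by
  have h := image_sub_le_mul_sub_of_deriv_le (f := Φ)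
    (fun t => (hasDerivAt_stdGaussCDF t).differentiableAt)
    (fun t => (hasDerivAt_stdGaussCDF t).deriv ▸ gaussianPDFReal_zero_one_le_one t)
    (le_add_of_nonneg_right hδ : x ≤ x + δ)
  linarith

/-- The Mills ratio `(1 - Φ) / φ` of the standard normal distribution. -/
def millsRatio (w : ℝ) : ℝ := (1 - Φ w) / φ w

lemma mul_one_sub_stdGaussCDF_le (w : ℝ) : w * (1 - Φ w) ≤ φ w := by
  have htail : ∫ t in Set.Ioi w, t * φ t = φ w := by
    have hderiv : ∀ t ∈ Set.Ici w, HasDerivAt (fun t => -φ t) (t * φ t) t := fun t _ =>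
      (hasDerivAt_gaussianPDFReal_zero_one t).neg.congr_deriv (by ring)
    rw [integral_Ioi_of_hasDerivAt_of_tendsto' hderiv
      integrable_mul_gaussianPDFReal_zero_one.integrableOn
      tendsto_gaussianPDFReal_zero_one_atTop.neg]
    ring
  calc w * (1 - Φ w) = ∫ t in Set.Ioi w, w * φ t := by
        rw [one_sub_stdGaussCDF, integral_const_mul]
    _ ≤ ∫ t in Set.Ioi w, t * φ t :=
        setIntegral_mono_on ((integrable_gaussianPDFReal 0 1).const_mul w).integrableOn
          integrable_mul_gaussianPDFReal_zero_one.integrableOn measurableSet_Ioi fun t ht =>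
            mul_le_mul_of_nonneg_right (le_of_lt ht) (gaussianPDFReal_nonneg 0 1 t)
    _ = φ w := htail

lemma mul_millsRatio_le_one (w : ℝ) : w * millsRatio w ≤ 1 := by
  rw [millsRatio, ← mul_div_assoc]
  exact div_le_one_of_le₀ (mul_one_sub_stdGaussCDF_le w) (gaussianPDFReal_nonneg 0 1 w)

lemma hasDerivAt_millsRatio (w : ℝ) :
    HasDerivAt millsRatio (w * millsRatio w - 1) w := by
  have hφ := (gaussianPDFReal_zero_one_pos w).ne'
  refine (((hasDerivAt_stdGaussCDF w).const_sub 1).div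
    (hasDerivAt_gaussianPDFReal_zero_one w) hφ).congr_deriv ?_
  rw [millsRatio]
  field_simp
  ring

lemma millsRatio_antitone : Antitone millsRatio :=
  antitone_of_hasDerivAt_nonpos hasDerivAt_millsRatio fun w =>
    sub_nonpos.2 (mul_millsRatio_le_one w)

lemma millsRatio_zero : millsRatio 0 = Real.sqrt (2 * Real.pi) / 2 := by
  have hhalf : Φ 0 = 1 / 2 := by
    have := stdGaussCDF_neg 0
    rw [neg_zero] at this
    linarith
  rw [millsRatio, hhalf, gaussianPDFReal_zero_one, zero_pow two_ne_zero, neg_zero, zero_div,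
    Real.exp_zero, mul_one, div_inv_eq_mul]
  ring

lemma millsRatio_le_two {w : ℝ} (hw : 0 ≤ w) : millsRatio w ≤ 2 := by
  have hsqrt : Real.sqrt (2 * Real.pi) ≤ 4 :=
    (Real.sqrt_le_left (by norm_num)).2 (by linarith [Real.pi_le_four])
  linarith [millsRatio_antitone hw, millsRatio_zero]

lemma millsRatio_neg (w : ℝ) : millsRatio (-w) = Φ w / φ w := by
  rw [millsRatio, stdGaussCDF_neg, gaussianPDFReal_zero_one_neg, sub_sub_cancel]

end StandardGaussian

section SteinEquation

/-- The bounded solution `f` of Stein's equation `f' w - w * f w = 1_{w < Z} - Φ Z`. -/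
def steinSol (Z w : ℝ) : ℝ := Φ (min w Z) * (1 - Φ (max w Z)) / φ w

/-- The right derivative of `steinSol Z`, as prescribed by Stein's equation. The half-line is open
so that the formula also holds at the kink `w = Z`. -/
def steinDeriv (Z w : ℝ) : ℝ := w * steinSol Z w + (Set.Iio Z).indicator 1 w - Φ Z

variable {Z w v δ : ℝ}

lemma steinSol_of_le (h : w ≤ Z) : steinSol Z w = (1 - Φ Z) * millsRatio (-w) := by
  rw [steinSol, min_eq_left h, max_eq_right h, millsRatio_neg]
  ring

lemma steinSol_of_ge (h : Z ≤ w) : steinSol Z w = Φ Z * millsRatio w := by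
  rw [steinSol, min_eq_right h, max_eq_left h, millsRatio, mul_div_assoc]

lemma continuous_steinSol (Z : ℝ) : Continuous (steinSol Z) := by
  have hΦ := continuous_stdGaussCDF
  refine Continuous.div ?_ continuous_gaussianPDFReal_zero_one fun w =>
    (gaussianPDFReal_zero_one_pos w).ne'
  fun_prop

lemma steinSol_nonneg (Z w : ℝ) : 0 ≤ steinSol Z w :=
  div_nonneg (mul_nonneg (stdGaussCDF_nonneg _) (sub_nonneg.2 (stdGaussCDF_le_one _)))
    (gaussianPDFReal_nonneg 0 1 w)

lemma steinSol_le_millsRatio (Z w : ℝ) : steinSol Z w ≤ millsRatio w := by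
  refine div_le_div_of_nonneg_right ?_ (gaussianPDFReal_nonneg 0 1 w)
  calc Φ (min w Z) * (1 - Φ (max w Z)) ≤ 1 * (1 - Φ (max w Z)) :=
        mul_le_mul_of_nonneg_right (stdGaussCDF_le_one _) (sub_nonneg.2 (stdGaussCDF_le_one _))
    _ ≤ 1 - Φ w := by linarith [stdGaussCDF_monotone (le_max_left w Z)]

lemma steinSol_le_millsRatio_neg (Z w : ℝ) : steinSol Z w ≤ millsRatio (-w) := by
  rw [millsRatio_neg]
  refine div_le_div_of_nonneg_right ?_ (gaussianPDFReal_nonneg 0 1 w)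
  calc Φ (min w Z) * (1 - Φ (max w Z)) ≤ Φ (min w Z) * 1 :=
        mul_le_mul_of_nonneg_left (by linarith [stdGaussCDF_nonneg (max w Z)])
          (stdGaussCDF_nonneg _)
    _ ≤ Φ w := by linarith [stdGaussCDF_monotone (min_le_left w Z)]

lemma steinSol_le_millsRatio_abs (Z w : ℝ) : steinSol Z w ≤ millsRatio |w| := by
  rcases abs_choice w with h | h <;> rw [h]
  · exact steinSol_le_millsRatio Z w
  · exact steinSol_le_millsRatio_neg Z w

lemma steinSol_le_two (Z w : ℝ) : steinSol Z w ≤ 2 :=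
  (steinSol_le_millsRatio_abs Z w).trans (millsRatio_le_two (abs_nonneg w))

lemma abs_mul_steinSol_le_one (Z w : ℝ) : |w * steinSol Z w| ≤ 1 := by
  rw [abs_mul, abs_of_nonneg (steinSol_nonneg Z w)]
  exact (mul_le_mul_of_nonneg_left (steinSol_le_millsRatio_abs Z w) (abs_nonneg w)).trans
    (mul_millsRatio_le_one |w|)

lemma abs_steinDeriv_le_two (Z w : ℝ) : |steinDeriv Z w| ≤ 2 := by
  have hmul := abs_le.1 (abs_mul_steinSol_le_one Z w)
  have hΦ0 := stdGaussCDF_nonneg Z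
  have hΦ1 := stdGaussCDF_le_one Z
  simp only [steinDeriv, Set.indicator_apply, Pi.one_apply]
  rw [abs_le]
  split_ifs <;> constructor <;> linarith

lemma hasDerivWithinAt_steinSol (Z w : ℝ) :
    HasDerivWithinAt (steinSol Z) (steinDeriv Z w) (Set.Ici w) w := by
  rcases lt_or_ge w Z with h | h
  · have hleft : HasDerivAt (fun x => (1 - Φ Z) * millsRatio (-x)) (steinDeriv Z w) w := by
      refine (((hasDerivAt_millsRatio (-w)).scomp w (hasDerivAt_neg w)).const_mul
        (1 - Φ Z)).congr_deriv ?_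
      rw [steinDeriv, steinSol_of_le h.le, Set.indicator_of_mem (Set.mem_Iio.2 h), smul_eq_mul,
        Pi.one_apply]
      ring
    refine (hleft.congr_of_eventuallyEq ?_).hasDerivWithinAt
    filter_upwards [Iio_mem_nhds h] with x hx using steinSol_of_le (le_of_lt hx)
  · have hright : HasDerivAt (fun x => Φ Z * millsRatio x) (steinDeriv Z w) w := by
      refine ((hasDerivAt_millsRatio w).const_mul (Φ Z)).congr_deriv ?_
      rw [steinDeriv, steinSol_of_ge h, Set.indicator_of_notMem (by simpa using h)]
      ring
    exact hright.hasDerivWithinAt.congr (fun x hx => steinSol_of_ge (h.trans hx))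
      (steinSol_of_ge h)

lemma abs_steinSol_sub_le (Z w v : ℝ) : |steinSol Z v - steinSol Z w| ≤ 2 * |v - w| := by
  wlog h : w ≤ v generalizing w v
  · rw [abs_sub_comm, abs_sub_comm v]
    exact this v w (le_of_not_ge h)
  rw [abs_of_nonneg (sub_nonneg.2 h)]
  exact norm_image_sub_le_of_norm_deriv_right_le_segment (continuous_steinSol Z).continuousOn
    (fun x _ => hasDerivWithinAt_steinSol Z x) (fun x _ => abs_steinDeriv_le_two Z x) v
    (Set.right_mem_Icc.2 h)

lemma mul_steinSol_le_add (Z : ℝ) (h : |v - w| ≤ δ) :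
    w * steinSol Z w ≤ v * steinSol Z v + (2 * |w| + 2) * δ := by
  have hlip : w * (steinSol Z w - steinSol Z v) ≤ |w| * (2 * δ) :=
    calc w * (steinSol Z w - steinSol Z v) ≤ |w| * |steinSol Z v - steinSol Z w| := by
          rw [abs_sub_comm, ← abs_mul]
          exact le_abs_self _
      _ ≤ |w| * (2 * δ) := mul_le_mul_of_nonneg_left
          ((abs_steinSol_sub_le Z w v).trans (by linarith)) (abs_nonneg w)
  have hbdd : (w - v) * steinSol Z v ≤ δ * 2 :=
    mul_le_mul ((le_abs_self _).trans (abs_sub_comm w v ▸ h)) (steinSol_le_two Z v)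
      (steinSol_nonneg Z v) ((abs_nonneg _).trans h)
  linarith

/-- A lower bound for `steinDeriv Z` on the interval `[w - δ, w + δ)` in terms of the values at
the centre `w` alone. -/
def steinMinorant (Z δ w : ℝ) : ℝ :=
  (Set.Iic (Z - δ)).indicator 1 w - Φ Z + w * steinSol Z w - (2 * |w| + 2) * δ

lemma measurable_steinMinorant (Z δ : ℝ) : Measurable (steinMinorant Z δ) := by
  have hind : Measurable ((Set.Iic (Z - δ)).indicator (1 : ℝ → ℝ)) :=
    measurable_one.indicator measurableSet_Iic
  have hsol := (continuous_steinSol Z).measurable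
  unfold steinMinorant
  fun_prop

lemma steinMinorant_le_steinDeriv (hl : w - δ ≤ v) (hr : v < w + δ) :
    steinMinorant Z δ w ≤ steinDeriv Z v := by
  have hmul := mul_steinSol_le_add Z (abs_le.2 ⟨by linarith, by linarith⟩ : |v - w| ≤ δ)
  have hind : (Set.Iic (Z - δ)).indicator (1 : ℝ → ℝ) w ≤ (Set.Iio Z).indicator 1 v := by
    simp only [Set.indicator_apply, Set.mem_Iic, Set.mem_Iio, Pi.one_apply]
    split_ifs <;> linarith
  rw [steinMinorant, steinDeriv]
  linarith

lemma mul_sub_le_image_sub_of_le_deriv_right {f f' : ℝ → ℝ} {a b c : ℝ} (hab : a ≤ b)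
    (hf : ContinuousOn f (Set.Icc a b))
    (hf' : ∀ x ∈ Set.Ico a b, HasDerivWithinAt f (f' x) (Set.Ici x) x)
    (hc : ∀ x ∈ Set.Ico a b, c ≤ f' x) : c * (b - a) ≤ f b - f a := by
  have hline : ∀ x, HasDerivAt (fun x => f a + c * (x - a)) c x := fun x => by
    simpa using (((hasDerivAt_id x).sub_const a).const_mul c).const_add (f a)
  have := image_le_of_deriv_right_le_deriv_boundary
    (fun x _ => (hline x).continuousAt.continuousWithinAt)
    (fun x _ => (hline x).hasDerivWithinAt) (by simp) hf hf' hc (Set.right_mem_Icc.2 hab)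
  linarith

lemma sq_mul_steinMinorant_le (Z w : ℝ) {u : ℝ} (hu : |u| ≤ δ) :
    u ^ 2 * steinMinorant Z δ w ≤ u * (steinSol Z (w + u) - steinSol Z w) := by
  obtain ⟨hl, hr⟩ := abs_le.1 hu
  have hmvt : ∀ {a b : ℝ}, a ≤ b → (∀ x ∈ Set.Ico a b, w - δ ≤ x ∧ x < w + δ) →
      steinMinorant Z δ w * (b - a) ≤ steinSol Z b - steinSol Z a := fun hab h =>
    mul_sub_le_image_sub_of_le_deriv_right hab (continuous_steinSol Z).continuousOn
      (fun x _ => hasDerivWithinAt_steinSol Z x)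
      fun x hx => steinMinorant_le_steinDeriv (h x hx).1 (h x hx).2
  rcases le_total 0 u with h | h
  · have := hmvt (a := w) (b := w + u) (by linarith)
      fun x hx => ⟨by linarith [hx.1], by linarith [hx.2]⟩
    nlinarith
  · have := hmvt (a := w + u) (b := w) (by linarith)
      fun x hx => ⟨by linarith [hx.1], by linarith [hx.2]⟩
    nlinarith

lemma le_steinMinorant (Z : ℝ) (h : |v - w| ≤ δ) :
    (Set.Iic (Z - 2 * δ)).indicator 1 w - Φ Z + w * steinSol Z w - (2 * |w| + 2) * δ
      - (2 * |v| + 2) * δ ≤ steinMinorant Z δ v := by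
  have hmul := mul_steinSol_le_add Z h
  have hind : (Set.Iic (Z - 2 * δ)).indicator (1 : ℝ → ℝ) w ≤ (Set.Iic (Z - δ)).indicator 1 v := by
    simp only [Set.indicator_apply, Set.mem_Iic, Pi.one_apply]
    split_ifs <;> linarith [abs_le.1 h]
  rw [steinMinorant]
  linarith

end SteinEquation

section BerryEsseen

variable {Ω : Type*} {mΩ : MeasurableSpace Ω} {μ : Measure Ω} {X Y W : Ω → ℝ} {δ : ℝ}

lemma integrable_mul_steinSol_comp (hX : Integrable X μ) (hY : AEMeasurable Y μ) (Z : ℝ) :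
    Integrable (fun ω => X ω * steinSol Z (Y ω)) μ :=
  hX.mul_bdd ((continuous_steinSol Z).measurable.comp_aemeasurable hY).aestronglyMeasurable
    (Eventually.of_forall fun ω => by
      rw [Real.norm_of_nonneg (steinSol_nonneg Z _)]
      exact steinSol_le_two Z _)

lemma integral_mul_steinSol_comp_eq_zero (hXY : X ⟂ᵢ[μ] Y) (hX : AEMeasurable X μ)
    (hY : AEMeasurable Y μ) (hmean : μ[X] = 0) (Z : ℝ) :
    ∫ ω, X ω * steinSol Z (Y ω) ∂μ = 0 := by
  have hsol := (continuous_steinSol Z).measurable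
  have hprod := (hXY.comp measurable_id hsol).integral_fun_mul_eq_mul_integral
    hX.aestronglyMeasurable (hsol.comp_aemeasurable hY).aestronglyMeasurable
  simpa [hmean] using hprod

lemma integral_indicator_one_comp {s : Set ℝ} (hs : MeasurableSet s) (hY : AEMeasurable Y μ) :
    ∫ ω, s.indicator (1 : ℝ → ℝ) (Y ω) ∂μ = μ.real (Y ⁻¹' s) := by
  rw [← integral_map hY (measurable_one.indicator hs).aestronglyMeasurable,
    integral_indicator_one hs, map_measureReal_apply_of_aemeasurable hY hs]

variable [IsProbabilityMeasure μ]

lemma integrable_indicator_one_comp {s : Set ℝ} (hs : MeasurableSet s) (hY : AEMeasurable Y μ) :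
    Integrable (fun ω => s.indicator (1 : ℝ → ℝ) (Y ω)) μ :=
  .of_bound ((measurable_one.indicator hs).comp_aemeasurable hY).aestronglyMeasurable 1
    (Eventually.of_forall fun _ => (norm_indicator_le_norm_self _ _).trans_eq norm_one)

lemma integrable_two_mul_abs_add_two_mul (hY : Integrable Y μ) (δ : ℝ) :
    Integrable (fun ω => (2 * |Y ω| + 2) * δ) μ :=
  ((hY.abs.const_mul 2).add (integrable_const 2)).mul_const δ

lemma integral_two_mul_abs_add_two_mul_le (hY : Integrable Y μ) (hY1 : ∫ ω, |Y ω| ∂μ ≤ 1)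
    (hδ : 0 ≤ δ) : ∫ ω, (2 * |Y ω| + 2) * δ ∂μ ≤ 4 * δ := by
  rw [integral_mul_const, integral_add (hY.abs.const_mul 2) (integrable_const 2),
    integral_const_mul, integral_const, probReal_univ, one_smul]
  exact mul_le_mul_of_nonneg_right (by linarith) hδ

lemma integrable_steinMinorant_comp (hY : Integrable Y μ) (Z δ : ℝ) :
    Integrable (fun ω => steinMinorant Z δ (Y ω)) μ :=
  (((integrable_indicator_one_comp measurableSet_Iic hY.aemeasurable).sub
    (integrable_const _)).add (integrable_mul_steinSol_comp hY hY.aemeasurable Z)).sub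
      (integrable_two_mul_abs_add_two_mul hY δ)

lemma integral_sq_mul_integral_steinMinorant_le (hXY : X ⟂ᵢ[μ] Y) (hX : AEMeasurable X μ)
    (hY : Integrable Y μ) (hmean : μ[X] = 0) (hbdd : ∀ᵐ ω ∂μ, |X ω| ≤ δ) (Z : ℝ) :
    (∫ ω, X ω ^ 2 ∂μ) * ∫ ω, steinMinorant Z δ (Y ω) ∂μ
      ≤ ∫ ω, X ω * steinSol Z (Y ω + X ω) ∂μ := by
  have hXint : Integrable X μ := .of_bound hX.aestronglyMeasurable δ hbdd
  have hindep : (fun ω => X ω ^ 2) ⟂ᵢ[μ] fun ω => steinMinorant Z δ (Y ω) :=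
    hXY.comp (measurable_id.pow_const 2) (measurable_steinMinorant Z δ)
  have hsq : Integrable (fun ω => X ω ^ 2) μ :=
    (MemLp.of_bound hX.aestronglyMeasurable δ hbdd).integrable_sq
  have hmin := integrable_steinMinorant_comp hY Z δ
  have hsum : Integrable (fun ω => X ω * steinSol Z (Y ω + X ω)) μ :=
    integrable_mul_steinSol_comp hXint (hY.aemeasurable.add hX) Z
  have hfst := integrable_mul_steinSol_comp hXint hY.aemeasurable Z
  calc (∫ ω, X ω ^ 2 ∂μ) * ∫ ω, steinMinorant Z δ (Y ω) ∂μ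
      = ∫ ω, X ω ^ 2 * steinMinorant Z δ (Y ω) ∂μ :=
        (hindep.integral_fun_mul_eq_mul_integral hsq.aestronglyMeasurable
          hmin.aestronglyMeasurable).symm
    _ ≤ ∫ ω, (X ω * steinSol Z (Y ω + X ω) - X ω * steinSol Z (Y ω)) ∂μ := by
        refine integral_mono_ae (hindep.integrable_mul hsq hmin) (hsum.sub hfst)
          (hbdd.mono fun ω hω => ?_)
        simpa only [mul_sub] using sq_mul_steinMinorant_le Z (Y ω) hω
    _ = ∫ ω, X ω * steinSol Z (Y ω + X ω) ∂μ := by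
        rw [integral_sub hsum hfst,
          integral_mul_steinSol_comp_eq_zero hXY hX hY.aemeasurable hmean, sub_zero]

lemma le_integral_steinMinorant (hW : Integrable W μ) (hY : Integrable Y μ)
    (hclose : ∀ᵐ ω ∂μ, |Y ω - W ω| ≤ δ) (hW1 : ∫ ω, |W ω| ∂μ ≤ 1) (hY1 : ∫ ω, |Y ω| ∂μ ≤ 1)
    (Z : ℝ) :
    μ.real {ω | W ω ≤ Z - 2 * δ} - Φ Z + ∫ ω, W ω * steinSol Z (W ω) ∂μ - 8 * δ
      ≤ ∫ ω, steinMinorant Z δ (Y ω) ∂μ := by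
  have hδ : 0 ≤ δ := by
    obtain ⟨ω, hω⟩ := hclose.exists
    exact (abs_nonneg _).trans hω
  have hind := integrable_indicator_one_comp (measurableSet_Iic (a := Z - 2 * δ)) hW.aemeasurable
  have hshift := hind.sub (integrable_const (Φ Z))
  have hsol := integrable_mul_steinSol_comp hW hW.aemeasurable Z
  have hWlin := integrable_two_mul_abs_add_two_mul hW δ
  have hYlin := integrable_two_mul_abs_add_two_mul hY δ
  have hmono := integral_mono_ae (((hshift.add hsol).sub hWlin).sub hYlin)
    (integrable_steinMinorant_comp hY Z δ) (hclose.mono fun ω hω => le_steinMinorant Z hω)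
  rw [integral_sub' ((hshift.add hsol).sub hWlin) hYlin, integral_sub' (hshift.add hsol) hWlin,
    integral_add' hshift hsol, integral_sub' hind (integrable_const _),
    integral_indicator_one_comp measurableSet_Iic hW.aemeasurable, integral_const,
    probReal_univ, one_smul] at hmono
  have hprob : μ.real (W ⁻¹' Set.Iic (Z - 2 * δ)) = μ.real {ω | W ω ≤ Z - 2 * δ} := rfl
  linarith [integral_two_mul_abs_add_two_mul_le hW hW1 hδ,
    integral_two_mul_abs_add_two_mul_le hY hY1 hδ]

lemma integral_abs_le_one (hY : MemLp Y 2 μ) (hmean : μ[Y] = 0) (hvar : Var[Y; μ] ≤ 1) :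
    ∫ ω, |Y ω| ∂μ ≤ 1 := by
  rw [variance_of_integral_eq_zero hY.aemeasurable hmean] at hvar
  have hmono : ∫ ω, |Y ω| ∂μ ≤ ∫ ω, (1 + Y ω ^ 2) / 2 ∂μ :=
    integral_mono (hY.integrable one_le_two).abs
      (((integrable_const 1).add hY.integrable_sq).div_const 2)
      fun ω => by nlinarith [sq_nonneg (|Y ω| - 1), sq_abs (Y ω)]
  rw [integral_div, integral_add (integrable_const 1) hY.integrable_sq, integral_const,
    probReal_univ, one_smul] at hmono
  linarith

variable {ι : Type*} [Fintype ι] {ξ : ι → Ω → ℝ}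

lemma integral_abs_sum_le_one (hindep : iIndepFun ξ μ) (hξ : ∀ i, MemLp (ξ i) 2 μ)
    (hmean : ∀ i, μ[ξ i] = 0) (hvar : ∑ i, Var[ξ i; μ] ≤ 1) (s : Finset ι) :
    ∫ ω, |∑ i ∈ s, ξ i ω| ∂μ ≤ 1 := by
  have hsum : Var[∑ i ∈ s, ξ i; μ] = ∑ i ∈ s, Var[ξ i; μ] :=
    IndepFun.variance_sum (fun i _ => hξ i) fun i _ j _ hij => hindep.indepFun hij
  have hle : Var[∑ i ∈ s, ξ i; μ] ≤ 1 := hsum.trans_le <|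
    (Finset.sum_le_univ_sum_of_nonneg fun i => variance_nonneg _ _).trans hvar
  have hmean_sum : μ[∑ i ∈ s, ξ i] = 0 := by
    simp_rw [Finset.sum_apply]
    rw [integral_finsetSum s fun i _ => (hξ i).integrable one_le_two]
    exact Finset.sum_eq_zero fun i _ => hmean i
  simpa only [Finset.sum_apply] using
    integral_abs_le_one (memLp_finsetSum' s fun i _ => hξ i) hmean_sum hle

lemma variance_mul_le_integral_mul_steinSol_sum (hindep : iIndepFun ξ μ)
    (hξ : ∀ i, AEMeasurable (ξ i) μ) (hmean : ∀ i, μ[ξ i] = 0)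
    (hbdd : ∀ i, ∀ᵐ ω ∂μ, |ξ i ω| ≤ δ) (hvar : ∑ i, Var[ξ i; μ] ≤ 1) (Z : ℝ) (i : ι) :
    Var[ξ i; μ] * (μ.real {ω | ∑ j, ξ j ω ≤ Z - 2 * δ} - Φ Z
        + ∫ ω, (∑ j, ξ j ω) * steinSol Z (∑ j, ξ j ω) ∂μ - 8 * δ)
      ≤ ∫ ω, ξ i ω * steinSol Z (∑ j, ξ j ω) ∂μ := by
  classical
  have hLp : ∀ j, MemLp (ξ j) 2 μ := fun j => .of_bound (hξ j).aestronglyMeasurable δ (hbdd j)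
  have hint : ∀ s : Finset ι, Integrable (fun ω => ∑ j ∈ s, ξ j ω) μ := fun s =>
    integrable_finsetSum s fun j _ => (hLp j).integrable one_le_two
  have habs := integral_abs_sum_le_one hindep hLp hmean hvar
  have hsplit : ∀ ω, ∑ j ∈ Finset.univ.erase i, ξ j ω + ξ i ω = ∑ j, ξ j ω := fun ω =>
    Finset.sum_erase_add _ _ (Finset.mem_univ i)
  have hleave : ξ i ⟂ᵢ[μ] fun ω => ∑ j ∈ Finset.univ.erase i, ξ j ω := by
    simpa only [Finset.sum_fn] using
      (hindep.indepFun_finsetSum_of_notMem₀ hξ (Finset.notMem_erase i _)).symm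
  have hclose : ∀ᵐ ω ∂μ, |∑ j ∈ Finset.univ.erase i, ξ j ω - ∑ j, ξ j ω| ≤ δ :=
    (hbdd i).mono fun ω hω => by rwa [← hsplit ω, sub_add_cancel_left, abs_neg]
  have hstein := integral_sq_mul_integral_steinMinorant_le hleave (hξ i) (hint _) (hmean i)
    (hbdd i) Z
  simp only [hsplit] at hstein
  rw [variance_of_integral_eq_zero (hξ i) (hmean i)]
  exact (mul_le_mul_of_nonneg_left
    (le_integral_steinMinorant (hint _) (hint _) hclose (habs _) (habs _) Z)
    (integral_nonneg fun ω => sq_nonneg _)).trans hstein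

theorem measureReal_sum_le_le_stdGaussCDF_add (hindep : iIndepFun ξ μ)
    (hξ : ∀ i, AEMeasurable (ξ i) μ) (hmean : ∀ i, μ[ξ i] = 0)
    (hbdd : ∀ i, ∀ᵐ ω ∂μ, |ξ i ω| ≤ δ) (hvar : ∑ i, Var[ξ i; μ] = 1) (z : ℝ) :
    μ.real {ω | ∑ i, ξ i ω ≤ z} ≤ Φ z + 10 * δ := by
  have hδ : 0 ≤ δ := by
    have hne : Nonempty ι := not_isEmpty_iff.1 fun _ =>
      zero_ne_one ((Finset.sum_of_isEmpty _).symm.trans hvar)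
    obtain ⟨ω, hω⟩ := (hbdd hne.some).exists
    exact (abs_nonneg _).trans hω
  set Z := z + 2 * δ with hZ
  have hint : ∀ i, Integrable (ξ i) μ := fun i => .of_bound (hξ i).aestronglyMeasurable δ (hbdd i)
  have hsum_stein : ∫ ω, (∑ i, ξ i ω) * steinSol Z (∑ i, ξ i ω) ∂μ
      = ∑ i, ∫ ω, ξ i ω * steinSol Z (∑ j, ξ j ω) ∂μ := by
    simp_rw [Finset.sum_mul]
    exact integral_finsetSum _ fun i _ =>
      integrable_mul_steinSol_comp (hint i) (Finset.aemeasurable_fun_sum _ fun j _ => hξ j) Z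
  have hstein := Finset.sum_le_sum fun i (_ : i ∈ Finset.univ) =>
    variance_mul_le_integral_mul_steinSol_sum hindep hξ hmean hbdd hvar.le Z i
  rw [← Finset.sum_mul, hvar, one_mul, ← hsum_stein, hZ, add_sub_cancel_right, ← hZ] at hstein
  linarith [stdGaussCDF_add_le z (mul_nonneg zero_le_two hδ)]

variable {𝒳 : Type*} {m𝒳 : MeasurableSpace 𝒳} {ν : Measure 𝒳} [IsProbabilityMeasure ν]
  {g h : 𝒳 → ℝ} {M : ℝ} {n : ℕ}

lemma measureReal_pi_sum_le_le_of_standardized (hg : Measurable g) (hmean : ν[g] = 0)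
    (hbdd : ∀ x, |g x| ≤ δ) (hn : 1 ≤ n) (hvar : Var[g; ν] = (n : ℝ)⁻¹) (z : ℝ) :
    (Measure.pi fun _ : Fin n => ν).real {a | ∑ i, g (a i) ≤ z} ≤ Φ z + 10 * δ := by
  have heval := fun i : Fin n => measurePreserving_eval (fun _ : Fin n => ν) i
  have hmean_eval : ∀ i, ∫ a, g (a i) ∂(Measure.pi fun _ : Fin n => ν) = 0 := fun i =>
    (integral_comp_eval (μ := fun _ : Fin n => ν) hg.aestronglyMeasurable).trans hmean
  have hvar_eval : ∀ i, Var[fun a => g (a i); Measure.pi fun _ : Fin n => ν] = (n : ℝ)⁻¹ :=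
    fun i => ((heval i).variance_fun_comp hg.aemeasurable).trans hvar
  refine measureReal_sum_le_le_stdGaussCDF_add (iIndepFun_pi fun _ => hg.aemeasurable)
    (fun i => (hg.comp (measurable_pi_apply i)).aemeasurable) hmean_eval
    (fun i => Eventually.of_forall fun a => hbdd _) ?_ z
  rw [Finset.sum_congr rfl fun i _ => hvar_eval i, Finset.sum_const, Finset.card_fin,
    nsmul_eq_mul, mul_inv_cancel₀ (Nat.cast_ne_zero.2 (by lia))]

theorem measureReal_pi_sum_le_le_stdGaussCDF_add (hh : Measurable h)
    (hbdd : ∀ x, |h x - ν[h]| ≤ M) (hvar : 0 < Var[h; ν]) (hn : 1 ≤ n) (z : ℝ) :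
    (Measure.pi fun _ : Fin n => ν).real
        {a | ∑ i, h (a i) ≤ n * ν[h] + z * Real.sqrt (n * Var[h; ν])}
      ≤ Φ z + 10 * (M / Real.sqrt (n * Var[h; ν])) := by
  set m := ν[h]
  set σ := Real.sqrt (n * Var[h; ν])
  have hnpos : (0 : ℝ) < n := by exact_mod_cast hn
  have hσpos : 0 < σ := Real.sqrt_pos.2 (mul_pos hnpos hvar)
  have hσsq : σ ^ 2 = n * Var[h; ν] := Real.sq_sqrt (mul_pos hnpos hvar).le
  have hcenter : ∫ x, (h x - m) ∂ν = 0 := by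
    simpa only [average_eq_integral] using integral_sub_average ν h
  have hset : {a : Fin n → 𝒳 | ∑ i, h (a i) ≤ n * m + z * σ}
      = {a | ∑ i, (h (a i) - m) / σ ≤ z} := by
    ext a
    simp only [Set.mem_ofPred_eq]
    rw [← Finset.sum_div, div_le_iff₀ hσpos, Finset.sum_sub_distrib, Finset.sum_const,
      Finset.card_fin, nsmul_eq_mul, sub_le_iff_le_add']
  rw [hset]
  refine measureReal_pi_sum_le_le_of_standardized ((hh.sub_const m).div_const σ) ?_
    (fun x => ?_) hn ?_ z
  · rw [integral_div, hcenter, zero_div]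
  · rw [abs_div, abs_of_pos hσpos]
    exact div_le_div_of_nonneg_right (hbdd x) hσpos.le
  · simp_rw [div_eq_mul_inv]
    rw [variance_mul_const, variance_sub_const hh.aestronglyMeasurable, inv_pow, hσsq]
    field_simp

end BerryEsseen

section PmfLaw

/-- The probability mass function with the coordinates of a point of the standard simplex as
weights. -/
def simplexPMF {α : Type*} [Fintype α] (γ : α → ℝ) (hγ : γ ∈ stdSimplex ℝ α) : PMF α :=
  PMF.ofFintype (fun a => ENNReal.ofReal (γ a)) <| by
    rw [← ENNReal.ofReal_sum_of_nonneg fun a _ => hγ.1 a, hγ.2, ENNReal.ofReal_one]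

lemma integral_simplexPMF {α : Type*} [Fintype α] [MeasurableSpace α] [MeasurableSingletonClass α]
    {γ : α → ℝ} (hγ : γ ∈ stdSimplex ℝ α) (f : α → ℝ) :
    ∫ a, f a ∂(simplexPMF γ hγ).toMeasure = ∑ a, γ a * f a := by
  rw [PMF.integral_eq_sum]
  refine Finset.sum_congr rfl fun a _ => ?_
  rw [simplexPMF, PMF.ofFintype_apply, ENNReal.toReal_ofReal (hγ.1 a), smul_eq_mul]

variable {d : ℕ} {γ p0 : Fin d → ℝ} {P : Measure (ℕ → Fin d)} {L : ℝ} {n : ℕ}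

lemma klFin_eq_integral (hγ : γ ∈ stdSimplex ℝ (Fin d)) (p0 : Fin d → ℝ) :
    klFin γ p0 = ∫ i, Real.log (γ i / p0 i) ∂(simplexPMF γ hγ).toMeasure :=
  (integral_simplexPMF hγ _).symm

lemma vFin_eq_variance (hγ : γ ∈ stdSimplex ℝ (Fin d)) (p0 : Fin d → ℝ) :
    vFin γ p0 = Var[fun i => Real.log (γ i / p0 i); (simplexPMF γ hγ).toMeasure] := by
  rw [variance_eq_sub MemLp.of_discrete, ← klFin_eq_integral hγ, integral_simplexPMF hγ]
  rfl

lemma vFin_eq_sum_sq (hγ : γ ∈ stdSimplex ℝ (Fin d)) (p0 : Fin d → ℝ) :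
    vFin γ p0 = ∑ i, γ i * (Real.log (γ i / p0 i) - klFin γ p0) ^ 2 := by
  rw [vFin_eq_variance hγ, variance_eq_integral (measurable_of_finite _).aemeasurable,
    ← klFin_eq_integral hγ, integral_simplexPMF hγ]

lemma vFin_pos (hγ : γ ∈ stdSimplex ℝ (Fin d)) (hp0 : p0 ∈ stdSimplex ℝ (Fin d))
    (hγpos : ∀ i, 0 < γ i) (hp0pos : ∀ i, 0 < p0 i) (hne : γ ≠ p0) : 0 < vFin γ p0 := by
  have hnonneg : ∀ i ∈ Finset.univ, 0 ≤ γ i * (Real.log (γ i / p0 i) - klFin γ p0) ^ 2 :=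
    fun i _ => mul_nonneg (hγpos i).le (sq_nonneg _)
  rw [vFin_eq_sum_sq hγ]
  -- Vanishing variance forces `γ` to be a multiple of `p0`; both have total mass one.
  refine (Finset.sum_nonneg hnonneg).lt_of_ne' fun hzero => hne ?_
  have hmul : ∀ i, γ i = Real.exp (klFin γ p0) * p0 i := fun i => by
    have hterm := (Finset.sum_eq_zero_iff_of_nonneg hnonneg).1 hzero i (Finset.mem_univ i)
    have hlog : Real.log (γ i / p0 i) = klFin γ p0 := by
      simpa [(hγpos i).ne', sub_eq_zero] using hterm
    rw [← hlog, Real.exp_log (div_pos (hγpos i) (hp0pos i)), div_mul_cancel₀ _ (hp0pos i).ne']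
  have hone : Real.exp (klFin γ p0) = 1 := by
    rw [← hγ.2, Finset.sum_congr rfl fun i _ => hmul i, ← Finset.mul_sum, hp0.2, mul_one]
  exact funext fun i => by rw [hmul i, hone, one_mul]

lemma abs_klFin_le (hγ : γ ∈ stdSimplex ℝ (Fin d)) (hL : ∀ i, |Real.log (γ i / p0 i)| ≤ L) :
    |klFin γ p0| ≤ L := by
  rw [klFin_eq_integral hγ]
  simpa using norm_integral_le_of_norm_le_const (μ := (simplexPMF γ hγ).toMeasure)
    (f := fun i => Real.log (γ i / p0 i)) (Eventually.of_forall hL)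

lemma map_restrict_eq_pi_of_isIIDPmfLaw (hP : IsIIDPmfLaw P γ) (hγ : γ ∈ stdSimplex ℝ (Fin d))
    (n : ℕ) :
    P.map (fun ω (i : Fin n) => ω i) = Measure.pi fun _ : Fin n => (simplexPMF γ hγ).toMeasure := by
  refine Measure.ext_of_singleton fun a => ?_
  have hcyl : (fun ω (i : Fin n) => ω i) ⁻¹' {a} = {ω : ℕ → Fin d | ∀ i : Fin n, ω i = a i} :=
    Set.ext fun ω => funext_iff
  rw [Measure.map_apply (by fun_prop) (MeasurableSet.singleton a), hcyl, hP.2, Measure.pi_singleton]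
  simp_rw [PMF.toMeasure_apply_singleton _ _ (MeasurableSet.singleton _), simplexPMF,
    PMF.ofFintype_apply]

theorem measureReal_llr_le_le_stdGaussCDF_add (hP : IsIIDPmfLaw P γ)
    (hγ : γ ∈ stdSimplex ℝ (Fin d)) (hL : ∀ i, |Real.log (γ i / p0 i)| ≤ L)
    (hV : 0 < vFin γ p0) (hn : 1 ≤ n) (z : ℝ) :
    P.real {ω | _root_.llr p0 γ n ω ≤ n * klFin γ p0 + z * Real.sqrt (n * vFin γ p0)}
      ≤ Φ z + 20 * (L / Real.sqrt (n * vFin γ p0)) := by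
  set h : Fin d → ℝ := fun i => Real.log (γ i / p0 i)
  have hcentered : ∀ i, |h i - klFin γ p0| ≤ 2 * L := fun i =>
    (abs_sub _ _).trans (by linarith [hL i, abs_klFin_le hγ hL])
  have hset : {ω | _root_.llr p0 γ n ω ≤ n * klFin γ p0 + z * Real.sqrt (n * vFin γ p0)}
      = (fun ω (i : Fin n) => ω i) ⁻¹'
        {a | ∑ i, h (a i) ≤ n * klFin γ p0 + z * Real.sqrt (n * vFin γ p0)} := by
    ext ω
    simp only [_root_.llr, Finset.sum_range, Set.mem_ofPred_eq, Set.mem_preimage, h]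
  have hpi := measureReal_pi_sum_le_le_stdGaussCDF_add (ν := (simplexPMF γ hγ).toMeasure)
    (measurable_of_finite h) (klFin_eq_integral hγ p0 ▸ hcentered)
    (vFin_eq_variance hγ p0 ▸ hV) hn z
  rw [← vFin_eq_variance hγ, ← klFin_eq_integral hγ] at hpi
  rw [hset, ← map_measureReal_apply (by fun_prop) (Set.toFinite _).measurableSet,
    map_restrict_eq_pi_of_isIIDPmfLaw hP hγ]
  exact hpi.trans_eq (by ring)

end PmfLaw

section CompactAlternatives

variable {d : ℕ} {p0 : Fin d → ℝ} {K : Set (Fin d → ℝ)}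

lemma continuousOn_log_div (hp0 : ∀ i, p0 i ≠ 0) (hK : ∀ γ ∈ K, ∀ i, γ i ≠ 0) (i : Fin d) :
    ContinuousOn (fun γ : Fin d → ℝ => Real.log (γ i / p0 i)) K :=
  ContinuousOn.log (by fun_prop) fun γ hγ => div_ne_zero (hK γ hγ i) (hp0 i)

lemma continuousOn_klFin (hp0 : ∀ i, p0 i ≠ 0) (hK : ∀ γ ∈ K, ∀ i, γ i ≠ 0) :
    ContinuousOn (fun γ => klFin γ p0) K :=
  continuousOn_finsetSum _ fun i _ =>
    (continuous_apply i).continuousOn.mul (continuousOn_log_div hp0 hK i)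

lemma continuousOn_vFin (hp0 : ∀ i, p0 i ≠ 0) (hK : ∀ γ ∈ K, ∀ i, γ i ≠ 0) :
    ContinuousOn (fun γ => vFin γ p0) K :=
  (continuousOn_finsetSum _ fun i _ =>
    (continuous_apply i).continuousOn.mul ((continuousOn_log_div hp0 hK i).pow 2)).sub
      ((continuousOn_klFin hp0 hK).pow 2)

lemma exists_forall_abs_log_div_le (hKc : IsCompact K) (hp0 : ∀ i, p0 i ≠ 0)
    (hK : ∀ γ ∈ K, ∀ i, γ i ≠ 0) :
    ∃ L : ℝ, ∀ γ ∈ K, ∀ i, |Real.log (γ i / p0 i)| ≤ L := by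
  obtain ⟨L, hL⟩ := hKc.exists_bound_of_continuousOn
    (continuousOn_pi.2 (continuousOn_log_div hp0 hK))
  exact ⟨L, fun γ hγ i => (norm_le_pi_norm _ i).trans (hL γ hγ)⟩

lemma exists_pos_forall_le_vFin (hKc : IsCompact K) (hKs : K ⊆ stdSimplex ℝ (Fin d))
    (hK : ∀ γ ∈ K, ∀ i, 0 < γ i) (hp0 : p0 ∈ stdSimplex ℝ (Fin d)) (hp0pos : ∀ i, 0 < p0 i)
    (hp0K : p0 ∉ K) : ∃ v > 0, ∀ γ ∈ K, v ≤ vFin γ p0 :=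
  hKc.exists_forall_le' (continuousOn_vFin (fun i => (hp0pos i).ne') fun γ hγ i => (hK γ hγ i).ne')
    fun γ hγ => vFin_pos (hKs hγ) hp0 (hK γ hγ) hp0pos (ne_of_mem_of_not_mem hγ hp0K)

lemma bddBelow_image_klFin_add (hKc : IsCompact K) (hp0 : ∀ i, p0 i ≠ 0)
    (hK : ∀ γ ∈ K, ∀ i, γ i ≠ 0) (z : ℝ) (n : ℕ) :
    BddBelow ((fun γ => klFin γ p0 + z * Real.sqrt (vFin γ p0 / n)) '' K) :=
  hKc.bddBelow_image <| (continuousOn_klFin hp0 hK).add <|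
    ((continuousOn_vFin hp0 hK).div_const _).sqrt.const_mul z

end CompactAlternatives

section StoppingTime

variable {𝒳 : Type*} {d : ℕ} {p0 : 𝒳 → ℝ} {p : (Fin d → ℝ) → 𝒳 → ℝ} {Γ : Set (Fin d → ℝ)}
  {γ : Fin d → ℝ} {A B L : ℝ} {n : ℕ} {ω : ℕ → 𝒳}

lemma maxLlr_le_of_lt_gsprtTau (h : (n : ℕ∞) < gsprtTau p0 p Γ A B ω) :
    maxLlr p0 p Γ n ω ≤ A :=
  not_lt.1 fun hA => h.not_ge (sInf_le ⟨n, rfl, Or.inl hA⟩)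

lemma llr_le_maxLlr (hL : ∀ γ ∈ Γ, ∀ x, |Real.log (p γ x / p0 x)| ≤ L) (hγ : γ ∈ Γ) (n : ℕ)
    (ω : ℕ → 𝒳) : _root_.llr p0 (p γ) n ω ≤ maxLlr p0 p Γ n ω := by
  refine le_ciSup₂ (f := fun γ (_ : γ ∈ Γ) => _root_.llr p0 (p γ) n ω) ?_ γ hγ
  refine ⟨n * L, ?_⟩
  simp only [mem_upperBounds, Set.mem_iUnion, Set.mem_range]
  rintro _ ⟨γ', hγ', rfl⟩
  calc _root_.llr p0 (p γ') n ω ≤ ∑ _k ∈ Finset.range n, L :=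
        Finset.sum_le_sum fun k _ => (le_abs_self _).trans (hL γ' hγ' (ω k))
    _ = n * L := by rw [Finset.sum_const, Finset.card_range, nsmul_eq_mul]

end StoppingTime

section UniformBound

lemma mul_sqrt_div_eq_sqrt_mul {x : ℝ} (hx : 0 ≤ x) (v : ℝ) :
    x * Real.sqrt (v / x) = Real.sqrt (x * v) := by
  rw [Real.sqrt_div' v hx, Real.sqrt_mul hx, mul_div_left_comm, Real.div_sqrt, mul_comm]

variable {d : ℕ} {p0 γ : Fin d → ℝ} {Γ : Set (Fin d → ℝ)} {P : Measure (ℕ → Fin d)}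
  {L : ℝ} {n : ℕ}

theorem measureReal_lt_gsprtTau_le (hP : IsIIDPmfLaw P γ) (hγs : γ ∈ stdSimplex ℝ (Fin d))
    (hγ : γ ∈ Γ) (hL : ∀ γ ∈ Γ, ∀ i, |Real.log (γ i / p0 i)| ≤ L) (hV : 0 < vFin γ p0)
    (hn : 1 ≤ n) {z : ℝ}
    (hbdd : BddBelow ((fun γ => klFin γ p0 + z * Real.sqrt (vFin γ p0 / n)) '' Γ)) (B : ℝ) :
    P.real {ω | (n : ℕ∞) < gsprtTau p0 (fun γ => γ) Γ
        (n * sInf ((fun γ => klFin γ p0 + z * Real.sqrt (vFin γ p0 / n)) '' Γ)) B ω}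
      ≤ Φ z + 20 * (L / Real.sqrt (n * vFin γ p0)) := by
  have := hP.1
  have hthreshold : n * sInf ((fun γ => klFin γ p0 + z * Real.sqrt (vFin γ p0 / n)) '' Γ)
      ≤ n * klFin γ p0 + z * Real.sqrt (n * vFin γ p0) :=
    calc n * sInf ((fun γ => klFin γ p0 + z * Real.sqrt (vFin γ p0 / n)) '' Γ)
        ≤ n * (klFin γ p0 + z * Real.sqrt (vFin γ p0 / n)) :=
          mul_le_mul_of_nonneg_left (csInf_le hbdd (Set.mem_image_of_mem _ hγ)) n.cast_nonneg
      _ = n * klFin γ p0 + z * Real.sqrt (n * vFin γ p0) := by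
          rw [← mul_sqrt_div_eq_sqrt_mul n.cast_nonneg]
          ring
  refine (measureReal_mono fun ω hω => ?_).trans
    (measureReal_llr_le_le_stdGaussCDF_add hP hγs (hL γ hγ) hV hn z)
  exact ((llr_le_maxLlr hL hγ n ω).trans (maxLlr_le_of_lt_gsprtTau hω)).trans hthreshold

lemma exists_forall_iSup_lt_of_toReal_le {ι Ω : Type*} [MeasurableSpace Ω] {s : Set ι}
    {μ : ι → Measure Ω} (hμ : ∀ i ∈ s, IsFiniteMeasure (μ i)) {E : ℕ → Set Ω} {a b T : ℝ}
    (ha : 0 < a) (hba : b < a)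
    (h : ∀ i ∈ s, ∀ n : ℕ, 1 ≤ n → (μ i (E n)).toReal ≤ b + T / Real.sqrt n) :
    ∃ n1 : ℕ, ∀ n : ℕ, n1 < n → ⨆ i ∈ s, μ i (E n) < ENNReal.ofReal a := by
  have hlim : Tendsto (fun n : ℕ => b + T / Real.sqrt n) atTop (nhds b) := by
    simpa using ((Real.tendsto_sqrt_atTop.comp tendsto_natCast_atTop_atTop).const_div_atTop
      T).const_add b
  obtain ⟨n1, hn1⟩ := eventually_atTop.1 (hlim.eventually_lt_const hba)
  refine ⟨n1, fun n hn => ?_⟩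
  have hle : ⨆ i ∈ s, μ i (E n) ≤ ENNReal.ofReal (b + T / Real.sqrt n) :=
    iSup₂_le fun i hi => by
      have := hμ i hi
      rw [← ENNReal.ofReal_toReal (measure_ne_top (μ i) (E n))]
      exact ENNReal.ofReal_le_ofReal (h i hi n (by lia))
  exact hle.trans_lt ((ENNReal.ofReal_lt_ofReal_iff ha).2 (hn1 n hn.le))

theorem exists_forall_measureReal_lt_gsprtTau_le {P : (Fin d → ℝ) → Measure (ℕ → Fin d)}
    (hp0 : p0 ∈ stdSimplex ℝ (Fin d)) (hp0pos : ∀ i, 0 < p0 i)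
    (hP : ∀ γ ∈ Γ, IsIIDPmfLaw (P γ) γ) (hΓs : Γ ⊆ stdSimplex ℝ (Fin d)) (hp0Γ : p0 ∉ closure Γ)
    {c0 : ℝ} (hc0 : 0 < c0) (hΓpos : ∀ γ ∈ Γ, ∀ i, c0 ≤ γ i) :
    ∃ T : ℝ, 0 ≤ T ∧ ∀ γ ∈ Γ, ∀ n : ℕ, 1 ≤ n → ∀ z B : ℝ,
      (P γ).real {ω | (n : ℕ∞) < gsprtTau p0 (fun γ => γ) Γ
        (n * sInf ((fun γ => klFin γ p0 + z * Real.sqrt (vFin γ p0 / n)) '' Γ)) B ω}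
        ≤ Φ z + T / Real.sqrt n := by
  have hclosure : closure Γ ⊆ stdSimplex ℝ (Fin d) :=
    closure_minimal hΓs (isClosed_stdSimplex ℝ (Fin d))
  have hcompact : IsCompact (closure Γ) :=
    (isCompact_stdSimplex ℝ (Fin d)).of_isClosed_subset isClosed_closure hclosure
  have hpos : ∀ γ ∈ closure Γ, ∀ i, 0 < γ i := fun γ hγ i =>
    hc0.trans_le (closure_minimal (t := {γ : Fin d → ℝ | c0 ≤ γ i}) (fun γ hγ => hΓpos γ hγ i)
      (isClosed_le continuous_const (continuous_apply i)) hγ)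
  have hp0ne : ∀ i, p0 i ≠ 0 := fun i => (hp0pos i).ne'
  have hne : ∀ γ ∈ closure Γ, ∀ i, γ i ≠ 0 := fun γ hγ i => (hpos γ hγ i).ne'
  obtain ⟨L, hL⟩ := exists_forall_abs_log_div_le hcompact hp0ne hne
  obtain ⟨v, hv, hvle⟩ := exists_pos_forall_le_vFin hcompact hclosure hpos hp0 hp0pos hp0Γ
  refine ⟨20 * (|L| / Real.sqrt v), by positivity, fun γ hγ n hn z B => ?_⟩
  have hvγ := hvle γ (subset_closure hγ)
  have hnpos : (0 : ℝ) < n := by exact_mod_cast hn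
  have hL' : ∀ γ ∈ Γ, ∀ i, |Real.log (γ i / p0 i)| ≤ |L| := fun γ hγ i =>
    (hL γ (subset_closure hγ) i).trans (le_abs_self L)
  refine (measureReal_lt_gsprtTau_le (hP γ hγ) (hΓs hγ) hγ hL' (hv.trans_le hvγ) hn
    ((bddBelow_image_klFin_add hcompact hp0ne hne z n).mono (Set.image_mono subset_closure))
    B).trans ?_
  refine add_le_add le_rfl ?_
  calc 20 * (|L| / Real.sqrt (n * vFin γ p0)) ≤ 20 * (|L| / Real.sqrt (n * v)) := by gcongr
    _ = 20 * (|L| / Real.sqrt v) / Real.sqrt n := by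
        rw [Real.sqrt_mul hnpos.le]
        field_simp

end UniformBound

theorem gsprt_second_order_constraint_Pgamma_general
    {d : ℕ} {p0 : Fin d → ℝ} {Γ : Set (Fin d → ℝ)} {P : (Fin d → ℝ) → Measure (ℕ → Fin d)}
    (hp0 : p0 ∈ stdSimplex ℝ (Fin d)) (hp0pos : ∀ i, 0 < p0 i)
    (hP : ∀ γ ∈ Γ, IsIIDPmfLaw (P γ) γ) (hΓs : Γ ⊆ stdSimplex ℝ (Fin d)) (hp0Γ : p0 ∉ closure Γ)
    {c0 : ℝ} (hc0 : 0 < c0) (hΓpos : ∀ γ ∈ Γ, ∀ i, c0 ≤ γ i)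
    {ε η0 z : ℝ} (hη0 : η0 ∈ Set.Ioo 0 ε) (hz : Φ z = ε - η0) (B : ℕ → ℝ) :
    ∃ T1 : ℝ, 0 ≤ T1 ∧
      (∀ γ0 ∈ Γ, ∀ n : ℕ, 1 ≤ n →
        (P γ0 {ω | (n : ℕ∞) < gsprtTau p0 (fun γ => γ) Γ
          (n * sInf ((fun γ => klFin γ p0 + z * Real.sqrt (vFin γ p0 / n)) '' Γ))
          (B n) ω}).toReal ≤ ε - η0 + T1 / Real.sqrt n) ∧
      ∃ n1 : ℕ, ∀ n : ℕ, n1 < n →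
        ⨆ γ ∈ Γ, P γ {ω | (n : ℕ∞) < gsprtTau p0 (fun γ => γ) Γ
          (n * sInf ((fun γ => klFin γ p0 + z * Real.sqrt (vFin γ p0 / n)) '' Γ))
          (B n) ω} < ENNReal.ofReal ε := by
  obtain ⟨T1, hT1, hbound⟩ :=
    exists_forall_measureReal_lt_gsprtTau_le hp0 hp0pos hP hΓs hp0Γ hc0 hΓpos
  have hfirst := fun γ0 hγ0 n hn => hz ▸ hbound γ0 hγ0 n hn z (B n)
  have hprob : ∀ γ ∈ Γ, IsFiniteMeasure (P γ) := fun γ hγ => have := (hP γ hγ).1; inferInstance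
  exact ⟨T1, hT1, hfirst, exists_forall_iSup_lt_of_toReal_le hprob (hη0.1.trans hη0.2)
    (sub_lt_self ε hη0.1) hfirst⟩

/-- **Berry--Esseen bound on the GSPRT stopping time under the alternative
(achievability proof of Theorem 2, second constraint).**
Under Conditions (A1')--(A4'), fix `ε ∈ (0,1)` and `η_0 ∈ (0, ε)`, and let `τ_n`
be the GSPRT stopping time with upper threshold
`A_n = n min_{γ∈Γ} (D(p_γ‖p_0) + Φ⁻¹(ε - η_0) √(V(p_γ‖p_0)/n))` (and any lower
threshold `B_n > 0`).  Then there is a finite constant `T_1` such that for every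
`γ_0 ∈ Γ` (and every `n ≥ 1`), `P_{γ0}(τ_n > n) ≤ ε - η_0 + T_1/√n`;
consequently there exists `n_1(ε)` with `sup_{γ∈Γ} P_γ(τ_n > n) < ε` for all
`n > n_1(ε)`.  Here `z = Φ⁻¹(ε - η_0)` is characterized by `Φ(z) = ε - η_0`. -/
theorem gsprt_second_order_constraint_Pgamma
    {d : ℕ} (p0 : Fin d → ℝ) (F : (Fin d → ℝ) → ℝ) (Γ : Set (Fin d → ℝ))
    (P0 : Measure (ℕ → Fin d)) (P : (Fin d → ℝ) → Measure (ℕ → Fin d))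
    (hp0 : p0 ∈ stdSimplex ℝ (Fin d)) (hp0pos : ∀ i, 0 < p0 i)
    -- P0 and P γ are the laws of the i.i.d. observation sequence
    (hP0 : IsIIDPmfLaw P0 p0) (hP : ∀ γ ∈ Γ, IsIIDPmfLaw (P γ) γ)
    -- (A1'): Γ is the 0-sublevel set of a (piecewise-smooth) convex function F
    (hFconv : ConvexOn ℝ Set.univ F) (hFcont : Continuous F)
    (hΓ : Γ = {γ ∈ stdSimplex ℝ (Fin d) | F γ ≤ 0})
    (hΓne : Γ.Nonempty) (hp0notin : p0 ∉ Γ)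
    -- (A2')
    (c0 : ℝ) (hc0 : 0 < c0) (hΓpos : ∀ γ ∈ Γ, ∀ i, c0 ≤ γ i)
    -- (A3'): γ' minimizes D(p0‖p_γ) over Γ and F is smooth near γ'
    (γ' : Fin d → ℝ) (hγ'mem : γ' ∈ Γ)
    (hγ'min : IsMinOn (fun γ => klFin p0 γ) Γ γ')
    (η : ℝ) (hη : 0 < η) (hFsmooth : ContDiffOn ℝ (⊤ : ℕ∞) F (Metric.ball γ' η))
    -- (A4'): nonsingularity of the Jacobian of the KKT system at q = p0
    (hA4 : ∃ lam mu : ℝ,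
      (∀ i, p0 i = lam * γ' i + mu * γ' i * fderiv ℝ F γ' (Pi.single i 1)) ∧
      Function.Bijective (fderiv ℝ (kktMap F) (γ', lam, mu)))
    (ε η0 : ℝ) (hε : ε ∈ Set.Ioo (0 : ℝ) 1) (hη0 : η0 ∈ Set.Ioo (0 : ℝ) ε)
    (z : ℝ) (hz : stdGaussCDF z = ε - η0)
    (B : ℕ → ℝ) (hB : ∀ n, 0 < B n) :
    ∃ T1 : ℝ, 0 ≤ T1 ∧
      (∀ γ0 ∈ Γ, ∀ n : ℕ, 1 ≤ n →
        (P γ0 {ω | (n : ℕ∞) <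
          gsprtTau p0 (fun γ => γ) Γ
            ((n : ℝ) * sInf ((fun γ =>
              klFin γ p0 + z * Real.sqrt (vFin γ p0 / n)) '' Γ))
            (B n) ω}).toReal
          ≤ ε - η0 + T1 / Real.sqrt n) ∧
      (∃ n1 : ℕ, ∀ n : ℕ, n1 < n →
        (⨆ γ ∈ Γ, P γ {ω | (n : ℕ∞) <
          gsprtTau p0 (fun γ => γ) Γ
            ((n : ℝ) * sInf ((fun γ =>
              klFin γ p0 + z * Real.sqrt (vFin γ p0 / n)) '' Γ))
            (B n) ω})
          < ENNReal.ofReal ε) := by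
  have hclosed : IsClosed Γ :=
    hΓ ▸ (isClosed_stdSimplex ℝ (Fin d)).inter (isClosed_le hFcont continuous_const)
  exact gsprt_second_order_constraint_Pgamma_general hp0 hp0pos hP (hΓ ▸ Set.sep_subset _ _)
    (hclosed.closure_eq.symm ▸ hp0notin) hc0 hΓpos hη0 hz B

end
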